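/- Let f be a self-usage utility function, let q > 0 with q < f'(0), and let s ∈ (0,1) satisfy f'(1−s) = q. For 0 ≤ p < q let s₀(p) ∈ [0,1) satisfy f'(1−s₀(p)) = p, and define the optimal-linear-loyalty-program revenue R(p) = (q−p)·s − (f(1−s₀(p)) − f(1−s) − p·(s−s₀(p))). Then R(p) < R(0) = q·s − (f(1) − f(1−s)) for every p with 0 < p < q; that is, the platform's revenue under the optimal linear loyalty program is maximized by setting the base pay to p = 0, with bonus B = q and threshold t = s − (f(1) − f(1−s))/q. -/

import Mathlib

/-- A self-usage utility function `f` with derivative `f'`: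
differentiable on `[0,1]`, strictly increasing on `[0,1]`,
strictly concave on `[0,1]` (with `f'` strictly decreasing), and `f' 1 = 0`. -/
def SelfUsage (f f' : ℝ → ℝ) : Prop :=
  (∀ x ∈ Set.Icc (0:ℝ) 1, HasDerivWithinAt f (f' x) (Set.Icc (0:ℝ) 1) x) ∧
  StrictMonoOn f (Set.Icc (0:ℝ) 1) ∧
  StrictConcaveOn ℝ (Set.Icc (0:ℝ) 1) f ∧
  StrictAntiOn f' (Set.Icc (0:ℝ) 1) ∧
  f' 1 = 0

/-!
The base pay cancels out of the target terms: `R(p) = q·s + f(1 − s) − U(p)`, where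
`U(p) = f(1 − s₀(p)) + p·s₀(p)` is the utility an owner secures from base pay alone. Since
`f'(1 − s₀(p)) = p`, `U(p)` is the height at `1` of the tangent line to `f` at `1 − s₀(p)`, which by
strict concavity exceeds `f(1) = U(0)` unless `s₀(p) = 0`, that is, unless `p = 0`.
-/

open Set

/-- The utility of an owner who shares `σ` units at base pay `p` without any loyalty subsidy. -/
def ownerUtility (f : ℝ → ℝ) (p σ : ℝ) : ℝ :=
  f (1 - σ) + p * σ

/-- The platform's revenue under the optimal linear loyalty program, in the closed form given by the
monopoly theorem: `q` is the renter price, `s` the sharing level the program induces, `p` the base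
pay and `σ` the sharing level at base pay alone, the paper's `s₀(p)`. -/
def loyaltyRevenue (f : ℝ → ℝ) (q s p σ : ℝ) : ℝ :=
  (q - p) * s - (f (1 - σ) - f (1 - s) - p * (s - σ))

theorem loyaltyRevenue_eq_sub_ownerUtility (f : ℝ → ℝ) (q s p σ : ℝ) :
    loyaltyRevenue f q s p σ = q * s + f (1 - s) - ownerUtility f p σ := by
  unfold loyaltyRevenue ownerUtility
  ring

theorem loyaltyRevenue_zero_zero (f : ℝ → ℝ) (q s : ℝ) :
    loyaltyRevenue f q s 0 0 = q * s - (f 1 - f (1 - s)) := by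
  simp [loyaltyRevenue]

namespace SelfUsage

variable {f f' : ℝ → ℝ}

theorem deriv_one_sub_eq_zero_iff (hf : SelfUsage f f') {σ : ℝ} (hσ : σ ∈ Icc (0 : ℝ) 1) :
    f' (1 - σ) = 0 ↔ σ = 0 := by
  obtain ⟨-, -, -, hanti, hone⟩ := hf
  have hinj : f' (1 - σ) = f' 1 ↔ 1 - σ = 1 :=
    hanti.injOn.eq_iff (Icc.mem_iff_one_sub_mem.mp hσ) (right_mem_Icc.mpr zero_le_one)
  rwa [hone, sub_eq_self] at hinj

theorem apply_one_lt_ownerUtility (hf : SelfUsage f f') {σ : ℝ} (hσ : σ ∈ Ioc (0 : ℝ) 1) :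
    f 1 < ownerUtility f (f' (1 - σ)) σ := by
  obtain ⟨hderiv, -, hconc, -, -⟩ := hf
  have hmem : 1 - σ ∈ Icc (0 : ℝ) 1 := Icc.mem_iff_one_sub_mem.mp (Ioc_subset_Icc_self hσ)
  have hslope : slope f (1 - σ) 1 < f' (1 - σ) :=
    hconc.slope_lt_of_hasDerivWithinAt hmem (right_mem_Icc.mpr zero_le_one)
      (sub_lt_self 1 hσ.1) (hderiv _ hmem)
  rw [slope_def_field, sub_sub_cancel, div_lt_iff₀ hσ.1] at hslope
  exact sub_lt_iff_lt_add'.mp hslope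

end SelfUsage

theorem zero_base_pay_optimal_general {f f' : ℝ → ℝ} (hf : SelfUsage f f') (q s : ℝ)
    {P : Set ℝ} (hP : 0 ∈ P) {s₀ : ℝ → ℝ}
    (hs₀ : ∀ p ∈ P, s₀ p ∈ Icc (0 : ℝ) 1 ∧ f' (1 - s₀ p) = p) :
    (∀ p ∈ P, p ≠ 0 → loyaltyRevenue f q s p (s₀ p) < loyaltyRevenue f q s 0 (s₀ 0)) ∧
      loyaltyRevenue f q s 0 (s₀ 0) = q * s - (f 1 - f (1 - s)) := by
  have hzero : s₀ 0 = 0 := (hf.deriv_one_sub_eq_zero_iff (hs₀ 0 hP).1).mp (hs₀ 0 hP).2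
  rw [hzero, loyaltyRevenue_zero_zero]
  refine ⟨fun p hp hp_ne => ?_, rfl⟩
  obtain ⟨hmem, hderiv⟩ := hs₀ p hp
  have hpos : 0 < s₀ p := hmem.1.lt_of_ne' fun h =>
    hp_ne (hderiv ▸ (hf.deriv_one_sub_eq_zero_iff hmem).mpr h)
  have hutility : f 1 < ownerUtility f p (s₀ p) := by
    simpa only [hderiv] using hf.apply_one_lt_ownerUtility ⟨hpos, hmem.2⟩
  calc loyaltyRevenue f q s p (s₀ p)
      = q * s + f (1 - s) - ownerUtility f p (s₀ p) := loyaltyRevenue_eq_sub_ownerUtility ..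
    _ < q * s + f (1 - s) - f 1 := sub_lt_sub_left hutility _
    _ = q * s - (f 1 - f (1 - s)) := by ring

/-- the optimal-linear-loyalty-program revenue is maximized at
base pay p = 0, where it equals q·s − (f(1) − f(1−s)). -/
theorem zero_base_pay_optimal
    (f f' : ℝ → ℝ) (hf : SelfUsage f f')
    (q : ℝ) (hq : 0 < q) (hqf : q < f' 0)
    (s : ℝ) (hs : s ∈ Set.Ioo (0:ℝ) 1) (hds : f' (1 - s) = q)
    (s₀ : ℝ → ℝ)
    (hs₀ : ∀ p, 0 ≤ p → p < q → s₀ p ∈ Set.Ico (0:ℝ) 1 ∧ f' (1 - s₀ p) = p) :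
    (∀ p, 0 < p → p < q →
      (q - p) * s - (f (1 - s₀ p) - f (1 - s) - p * (s - s₀ p))
        < (q - 0) * s - (f (1 - s₀ 0) - f (1 - s) - 0 * (s - s₀ 0))) ∧
    (q - 0) * s - (f (1 - s₀ 0) - f (1 - s) - 0 * (s - s₀ 0))
      = q * s - (f 1 - f (1 - s)) := by
  have hopt := zero_base_pay_optimal_general hf q s (P := Ico 0 q) ⟨le_rfl, hq⟩ fun p hp =>
    (hs₀ p hp.1 hp.2).imp_left fun h => Ico_subset_Icc_self h
  exact ⟨fun p hp hpq => hopt.1 p ⟨hp.le, hpq⟩ hp.ne', hopt.2⟩
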